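/- Let F be a field, G a group, and A an associative G-graded F-algebra. Assume there exist a field extension F̃ of F and a G-graded simple F̃-algebra Ã such that: (i) Ã is isomorphic as a graded F̃-algebra to End_D(V) for some finite-dimensional graded vector space V over a commutative graded division F̃-algebra D; (ii) A is a homogeneous F-subalgebra of Ã; (iii) F̃·A = Ã. Then every nonzero homogeneous ideal of A intersects Z(A)_e nontrivially, and A satisfies an ordinary polynomial identity. In particular, if Z(A)_e is a field, then A is a graded simple F-algebra satisfying an ordinary polynomial identity. -/

import Mathlib

noncomputable section

section Setup

variable (FF : Type*) [Field FF] {G : Type*} [Group G] [DecidableEq G]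

/-- `𝒜` is a `G`-grading of the associative `FF`-algebra `tA`. -/
def IsAlgGrading {tA : Type*} [Ring tA] [Algebra FF tA] (𝒜 : G → Submodule FF tA) : Prop :=
  DirectSum.IsInternal 𝒜 ∧ ∀ (g h : G), ∀ a ∈ 𝒜 g, ∀ b ∈ 𝒜 h, a * b ∈ 𝒜 (g * h)

/-- `(D, 𝒟)` is a commutative graded division algebra. -/
def IsGradedDivisionAlgebra {D : Type*} [CommRing D] [Algebra FF D]
    (𝒟 : G → Submodule FF D) : Prop :=
  IsAlgGrading FF 𝒟 ∧ (1 : D) ∈ 𝒟 1 ∧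
    ∀ g : G, ∀ d ∈ 𝒟 g, d ≠ 0 → ∃ d' ∈ 𝒟 g⁻¹, d * d' = 1

/-- the degree-`h` component of `End_FF(V)`: maps sending `𝒱 g` into `𝒱 (h*g)`. -/
def endVGrading {V : Type*} [AddCommGroup V] [Module FF V]
    (𝒱 : G → Submodule FF V) (h : G) : Submodule FF (Module.End FF V) where
  carrier := {φ | ∀ g : G, ∀ x ∈ 𝒱 g, φ x ∈ 𝒱 (h * g)}
  add_mem' := fun hf hg g x hx => (𝒱 _).add_mem (hf g x hx) (hg g x hx)
  zero_mem' := fun g x hx => (𝒱 _).zero_mem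
  smul_mem' := fun c f hf g x hx => (𝒱 _).smul_mem c (hf g x hx)

/-- `End_D(V)` inside `End_FF(V)`: the `FF`-linear endomorphisms commuting with the `D`-action. -/
def EndDV {D : Type*} [CommRing D] [Algebra FF D] {V : Type*} [AddCommGroup V] [Module FF V]
    [Module D V] [IsScalarTower FF D V] [SMulCommClass FF D V] :
    Submodule FF (Module.End FF V) where
  carrier := {f | ∀ (d : D) (x : V), f (d • x) = d • f x}
  add_mem' := by intro f g hf hg d x; simp [LinearMap.add_apply, hf d x, hg d x]
  zero_mem' := by intro d x; simp
  smul_mem' := by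
    intro c f hf d x
    simp only [LinearMap.smul_apply, hf d x]
    rw [smul_comm]

/-- the degree-`e` part of the center of the `F`-subalgebra `S` of `tA`. -/
def ZAe (F : Type*) [Field F] {tA : Type*} [Ring tA] [Algebra FF tA] [Algebra F tA]
    (S : NonUnitalSubalgebra F tA) (𝒜 : G → Submodule FF tA) : Set tA :=
  {x | x ∈ S ∧ (∀ y ∈ S, x * y = y * x) ∧ x ∈ 𝒜 (1 : G)}

end Setup

/-!
Graded simplicity forces the `FF`-span of a nonzero homogeneous ideal `I` of `S` to be all of
`Ã ≅ M_n(D)`, and Razmyslov's argument produces central elements of `I`. Let `f` be an alternating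
`D`-form in `m = n²` matrix variables, obtained by alternating `tr (y₁ x₁ z₁ ⋯ y_m x_m z_m)` with
all `y_k, z_k ∈ I`. Its partial functionals at `x₁, …, x_m ∈ I` have the form `X ↦ tr (X P_i)` with
`P_i ∈ I`, and Cramer's rule `∑ tr (X P_i) x_i = f(x) X` dualizes to
`∑ x_i Y P_i = f(x) tr(Y) · 1`, a central element of `I` for every `Y ∈ I`. By
multilinearity the `FF`-span of these elements also contains the values with all arguments arbitrary
matrices; for suitable matrix units the value is `1`. Projecting to degree `e`, `1` lies in the
`FF`-span of `I ∩ Z(A)_e`.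

Hence `I ∩ Z(A)_e ≠ 0`, and a unit element of `Z(A)_e` must be `1`, so that `I = S` as soon as
`Z(A)_e` is a field. The polynomial identity is the standard one of degree `n² + 1`.
-/

open Equiv Matrix DirectSum Submodule

theorem multilinearMap_mem_of_mem_span {R ι M N : Type*} [Finite ι] [CommRing R] [AddCommGroup M]
    [Module R M] [AddCommGroup N] [Module R N] (f : MultilinearMap R (fun _ : ι => M) N)
    {s : Set M} {K : Submodule R N} (hf : ∀ v : ι → M, (∀ i, v i ∈ s) → f v ∈ K)
    {v : ι → M} (hv : ∀ i, v i ∈ span R s) : f v ∈ K := by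
  let S := span R s
  have h_zero : K.mkQ.compMultilinearMap (f.compLinearMap fun _ => S.subtype) = 0 := by
    refine MultilinearMap.ext_of_span_eq_top
      (g := fun _ (a : ((↑) ⁻¹' s : Set S)) => (a : S)) (fun _ => ?_) fun w => ?_
    · rw [Subtype.range_coe]
      exact span_span_coe_preimage
    · simpa using hf _ fun i => (w i).2
  simpa using DFunLike.congr_fun h_zero fun i => ⟨v i, hv i⟩

section Cramer

variable {R M ι : Type*} [CommRing R] [AddCommGroup M] [Module R M] [Fintype ι] [DecidableEq ι]

theorem sum_det_update_smul (b : Module.Basis ι R M) (x : ι → M) (X : M) :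
    ∑ i, b.det (Function.update x i X) • x i = b.det x • X := by
  refine b.ext_elem fun j => ?_
  have h_cramer := congrFun (Matrix.mulVec_cramer (b.toMatrix x) (b.repr X)) j
  simp only [Matrix.mulVec, dotProduct, Matrix.cramer_apply, ← Module.Basis.toMatrix_update,
    Module.Basis.toMatrix_apply, ← Module.Basis.det_apply] at h_cramer
  simpa [mul_comm] using h_cramer

theorem sum_alternatingMap_update_smul (b : Module.Basis ι R M) (f : M [⋀^ι]→ₗ[R] R)
    (x : ι → M) (X : M) : ∑ i, f (Function.update x i X) • x i = f x • X := by
  rw [f.eq_smul_basis_det b]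
  simp only [AlternatingMap.smul_apply, smul_assoc, ← Finset.smul_sum, sum_det_update_smul]

end Cramer

section TraceForms

variable {n D : Type*} [Fintype n] [CommRing D]

theorem sum_mul_mul_eq_algebraMap [DecidableEq n] {ι : Type*} [Fintype ι]
    {x P : ι → Matrix n n D} {c : D} (h : ∀ X, ∑ i, trace (X * P i) • x i = c • X)
    (Y : Matrix n n D) : ∑ i, x i * Y * P i = algebraMap D _ (c * trace Y) := by
  ext r s
  have h_entry (k : n) :
      ∑ i, (x i * Y) r k * P i k s = c * (single s k (1 : D) * Y) r k := by
    have h_apply := congrArg (fun T : Matrix n n D => (T * Y) r k) (h (single s k 1))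
    simpa [Finset.sum_mul, Matrix.sum_apply, trace_single_mul, mul_comm, -smul_single]
      using h_apply
  simp only [Matrix.sum_apply, mul_apply (M := x _ * Y)]
  rw [Finset.sum_comm, Finset.sum_congr rfl fun k _ => h_entry k, ← Finset.mul_sum]
  by_cases hrs : r = s
  · subst hrs
    simp [trace, algebraMap_matrix_apply]
  · simp [hrs, algebraMap_matrix_apply]

/-- The multilinear forms whose partial functionals at arguments from `I` are represented, under
the trace pairing, by elements of `I`. This property survives alternation, unlike an explicit
formula for the representing elements. -/
def traceRepresentable (I : NonUnitalSubring (Matrix n n D)) (ι : Type*) [DecidableEq ι] :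
    AddSubgroup (MultilinearMap D (fun _ : ι => Matrix n n D) D) where
  carrier := {f | ∀ x : ι → Matrix n n D, (∀ i, x i ∈ I) → ∀ i, ∃ P ∈ I, ∀ X,
    f (Function.update x i X) = trace (X * P)}
  zero_mem' _ _ _ := ⟨0, I.zero_mem, by simp⟩
  add_mem' {f g} hf hg x hx i := by
    obtain ⟨P, hP, hfP⟩ := hf x hx i
    obtain ⟨Q, hQ, hgQ⟩ := hg x hx i
    exact ⟨P + Q, I.add_mem hP hQ, fun X => by simp [hfP, hgQ, mul_add]⟩
  neg_mem' {f} hf x hx i := by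
    obtain ⟨P, hP, hfP⟩ := hf x hx i
    exact ⟨-P, I.neg_mem hP, fun X => by simp [hfP]⟩

variable {I : NonUnitalSubring (Matrix n n D)} {ι : Type*} [DecidableEq ι]

theorem domDomCongr_mem_traceRepresentable
    {f : MultilinearMap D (fun _ : ι => Matrix n n D) D} (hf : f ∈ traceRepresentable I ι)
    (σ : Perm ι) : f.domDomCongr σ ∈ traceRepresentable I ι := by
  intro x hx i
  obtain ⟨P, hP, hfP⟩ := hf (x ∘ σ) (fun j => hx (σ j)) (σ.symm i)
  refine ⟨P, hP, fun X => ?_⟩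
  rw [← hfP, MultilinearMap.domDomCongr_apply]
  exact congrArg f (Function.update_comp_equiv x σ i X)

theorem alternatization_mem_traceRepresentable [Fintype ι]
    {f : MultilinearMap D (fun _ : ι => Matrix n n D) D} (hf : f ∈ traceRepresentable I ι) :
    (MultilinearMap.alternatization f).toMultilinearMap ∈ traceRepresentable I ι := by
  rw [MultilinearMap.alternatization_coe]
  refine sum_mem fun σ _ => ?_
  rw [Units.smul_def]
  exact zsmul_mem (domDomCongr_mem_traceRepresentable hf σ) _

theorem algebraMap_mul_trace_mem [DecidableEq n] [Finite ι] (b : Module.Basis ι D (Matrix n n D))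
    (f : (Matrix n n D) [⋀^ι]→ₗ[D] D) (hf : f.toMultilinearMap ∈ traceRepresentable I ι)
    {x : ι → Matrix n n D} (hx : ∀ i, x i ∈ I) {Y : Matrix n n D} (hY : Y ∈ I) :
    algebraMap D _ (f x * trace Y) ∈ I := by
  cases nonempty_fintype ι
  choose P hP hfP using hf x hx
  have h_dual (X : Matrix n n D) : ∑ i, trace (X * P i) • x i = f x • X := by
    simp only [← hfP]
    exact sum_alternatingMap_update_smul b f x X
  rw [← sum_mul_mul_eq_algebraMap h_dual]
  exact sum_mem fun i _ => I.mul_mem (I.mul_mem (hx i) hY) (hP i)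

end TraceForms

theorem mul_list_prod_mem {R : Type*} [Ring R] {I : NonUnitalSubring R} {l : List R}
    (hl : ∀ a ∈ l, a ∈ I) {y : R} (hy : y ∈ I) : y * l.prod ∈ I := by
  induction l generalizing y with
  | nil => simpa
  | cons a l ih =>
    rw [List.prod_cons, ← mul_assoc]
    exact ih (fun b hb => hl b (.tail a hb)) (I.mul_mem hy (hl a (.head l)))

theorem list_prod_ofFn_update {R : Type*} [Monoid R] {m : ℕ} (f : Fin m → R) (i : Fin m) (a : R) :
    (List.ofFn (Function.update f i a)).prod =
      ((List.ofFn f).take i).prod * a * ((List.ofFn f).drop (i + 1)).prod := by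
  have h_set : List.ofFn (Function.update f i a) = (List.ofFn f).set i a := by
    refine List.ext_getElem (by simp) fun k _ _ => ?_
    simp [List.getElem_set, Function.update_apply, Fin.ext_iff, eq_comm]
  simp [h_set, List.prod_set]

section Capelli

variable {n D : Type*} [Fintype n] [DecidableEq n] [CommRing D] {m : ℕ}

/-- The alternating form `∑ σ, sign σ • tr (L₁ x_{σ 1} ⋯ L_m x_{σ m})`. For
`L_k = (x ↦ y_k * x * z_k)` it is the trace of a Capelli polynomial; arbitrary endomorphisms `L_k`
are allowed so that the form is also multilinear in `L`. -/
def capelliForm (L : Fin m → Module.End D (Matrix n n D)) : (Matrix n n D) [⋀^Fin m]→ₗ[D] D :=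
  MultilinearMap.alternatization ((traceLinearMap n D D).compMultilinearMap
    ((MultilinearMap.mkPiAlgebraFin D m (Matrix n n D)).compLinearMap L))

theorem capelliForm_apply (L : Fin m → Module.End D (Matrix n n D)) (x : Fin m → Matrix n n D) :
    capelliForm L x =
      ∑ σ : Perm (Fin m), Perm.sign σ • trace (List.ofFn fun k => L k (x (σ k))).prod := by
  simp [capelliForm, MultilinearMap.alternatization_apply]

theorem capelliForm_mulLeftRight_mem_traceRepresentable {I : NonUnitalSubring (Matrix n n D)}
    {y y' : Fin m → Matrix n n D} (hy : ∀ k, y k ∈ I) (hy' : ∀ k, y' k ∈ I) :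
    (capelliForm fun k => LinearMap.mulLeftRight D (y k, y' k)).toMultilinearMap ∈
      traceRepresentable I (Fin m) := by
  refine alternatization_mem_traceRepresentable fun x hx i => ?_
  let f : Fin m → Matrix n n D := fun k => y k * x k * y' k
  have hf : ∀ a ∈ List.ofFn f, a ∈ I := by
    simp only [List.mem_ofFn, forall_exists_index, forall_apply_eq_imp_iff]
    exact fun k => I.mul_mem (I.mul_mem (hy k) (hx k)) (hy' k)
  let p := (List.ofFn f).take i
  let q := (List.ofFn f).drop (i + 1)
  refine ⟨y' i * (q ++ p).prod * y i, I.mul_mem (mul_list_prod_mem ?_ (hy' i)) (hy i), fun X => ?_⟩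
  · intro a ha
    exact hf a ((List.mem_append.1 ha).elim List.mem_of_mem_drop List.mem_of_mem_take)
  · have h_update : (fun k => y k * Function.update x i X k * y' k) =
        Function.update f i (y i * X * y' i) :=
      funext fun k => Function.apply_update (fun k X => y k * X * y' k) x i X k
    calc trace (List.ofFn fun k => y k * Function.update x i X k * y' k).prod
        = trace (p.prod * (y i * X * y' i) * q.prod) := by rw [h_update, list_prod_ofFn_update]
      _ = trace ((p.prod * y i) * (X * y' i * q.prod)) := by simp only [mul_assoc]
      _ = trace (X * (y' i * (q ++ p).prod * y i)) := by
        rw [trace_mul_comm, List.prod_append]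
        simp only [mul_assoc]

theorem capelliForm_single_eq_one (e : Fin m ≃ n × n) (i₀ : n) :
    capelliForm (fun k => LinearMap.mulLeftRight D (single i₀ (e k).1 1, single (e k).2 i₀ 1))
      (fun k => single (e k).1 (e k).2 1) = 1 := by
  have h_diag : (List.ofFn fun k => single i₀ (e k).1 1 * single (e k).1 (e k).2 1 *
      single (e k).2 i₀ (1 : D)).prod = single i₀ i₀ 1 := by
    have hm : m ≠ 0 := by
      rintro rfl
      exact (e.symm (i₀, i₀)).elim0
    have h_idem : IsIdempotentElem (single i₀ i₀ (1 : D)) := by simp [IsIdempotentElem]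
    simp [List.ofFn_const, h_idem.pow_eq hm]
  have h_off_diag (σ : Perm (Fin m)) (hσ : σ ≠ 1) : (List.ofFn fun k => single i₀ (e k).1 1 *
      single (e (σ k)).1 (e (σ k)).2 1 * single (e k).2 i₀ (1 : D)).prod = 0 := by
    obtain ⟨k, hk⟩ : ∃ k, σ k ≠ k := by
      contrapose! hσ
      exact Equiv.ext hσ
    refine List.prod_eq_zero (List.mem_ofFn.2 ⟨k, ?_⟩)
    by_cases h_row : (e k).1 = (e (σ k)).1
    · have h_col : (e (σ k)).2 ≠ (e k).2 := fun h => hk (e.injective (Prod.ext h_row.symm h))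
      rw [mul_assoc, single_mul_single_of_ne (h := h_col), mul_zero]
    · rw [single_mul_single_of_ne (h := h_row), zero_mul]
  rw [capelliForm_apply, Finset.sum_eq_single 1]
  · simp only [LinearMap.mulLeftRight_apply, Perm.one_apply, h_diag]
    simp
  · intro σ _ hσ
    simp only [LinearMap.mulLeftRight_apply, h_off_diag σ hσ, trace_zero, smul_zero]
  · simp

end Capelli

section SpanCenter

variable {R n D : Type*} [Fintype n] [DecidableEq n] [CommRing R] [CommRing D] [Algebra R D]
  {m : ℕ} {I : NonUnitalSubring (Matrix n n D)}

theorem capelliForm_mem_of_mem_span {s : Set (Module.End D (Matrix n n D))}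
    {t : Set (Matrix n n D)} {K : Submodule R D}
    (hK : ∀ L x, (∀ k, L k ∈ s) → (∀ k, x k ∈ t) → capelliForm (m := m) L x ∈ K)
    {L : Fin m → Module.End D (Matrix n n D)} (hL : ∀ k, L k ∈ span R s)
    {x : Fin m → Matrix n n D} (hx : ∀ k, x k ∈ span R t) : capelliForm L x ∈ K := by
  let capelliIn (x : Fin m → Matrix n n D) :
      MultilinearMap R (fun _ : Fin m => Module.End D (Matrix n n D)) D :=
    ∑ σ : Perm (Fin m), Perm.sign σ • (traceLinearMap n R D).compMultilinearMap
      ((MultilinearMap.mkPiAlgebraFin R m (Matrix n n D)).compLinearMap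
        fun k => LinearMap.applyₗ' R (x (σ k)))
  have h_capelliIn (L x) : capelliIn x L = capelliForm L x := by
    simp [capelliIn, capelliForm_apply]
  rw [← h_capelliIn]
  refine multilinearMap_mem_of_mem_span _ (fun L hL => ?_) hL
  rw [h_capelliIn]
  exact multilinearMap_mem_of_mem_span ((capelliForm L).toMultilinearMap.restrictScalars R)
    (fun x hx => hK L x hL hx) hx

theorem mulLeftRight_mem_span_image2 {A : Type*} [Ring A] [Algebra D A] [Algebra R A]
    [IsScalarTower R D A] {s : Set A} (hs : span R s = ⊤) (a b : A) :
    LinearMap.mulLeftRight D (a, b) ∈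
      span R (Set.image2 (fun a b => LinearMap.mulLeftRight D (a, b)) s s) := by
  let f : A →ₗ[R] A →ₗ[R] Module.End D A :=
    LinearMap.mk₂ R (fun a b => LinearMap.mulLeftRight D (a, b))
      (fun a a' b => by ext; simp [add_mul]) (fun c a b => by ext; simp)
      (fun a b b' => by ext; simp [mul_add]) (fun c a b => by ext; simp)
  have h_mem := apply_mem_map₂ f (m := a) (n := b) mem_top mem_top
  rwa [← hs, map₂_span_span] at h_mem

theorem algebraMap_capelliForm_mem_span_inter_center
    (hI : span R (I : Set (Matrix n n D)) = ⊤) (e : Fin m ≃ n × n) (i₀ : n)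
    {y y' x : Fin m → Matrix n n D} (hy : ∀ k, y k ∈ I) (hy' : ∀ k, y' k ∈ I) (hx : ∀ k, x k ∈ I) :
    algebraMap D _ (capelliForm (fun k => LinearMap.mulLeftRight D (y k, y' k)) x) ∈
      span R (I ∩ Set.center (Matrix n n D)) := by
  let f := capelliForm fun k => LinearMap.mulLeftRight D (y k, y' k)
  let T : Matrix n n D →ₗ[R] Matrix n n D := (Algebra.linearMap D _).restrictScalars R ∘ₗ
    LinearMap.mulLeft R (f x) ∘ₗ traceLinearMap n R D
  have h_le : span R (I : Set (Matrix n n D)) ≤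
      (span R (I ∩ Set.center (Matrix n n D))).comap T :=
    span_le.2 fun Y hY => subset_span
      ⟨algebraMap_mul_trace_mem ((Matrix.stdBasis D n n).reindex e.symm) f
        (capelliForm_mulLeftRight_mem_traceRepresentable hy hy') hx hY,
        Set.algebraMap_mem_center (A := Matrix n n D) (f x * trace Y)⟩
  have h_single : T (single i₀ i₀ 1) ∈ span R (I ∩ Set.center (Matrix n n D)) :=
    h_le (hI ▸ mem_top)
  simpa [T] using h_single

theorem one_mem_span_inter_center_matrix (hI : span R (I : Set (Matrix n n D)) = ⊤) :
    (1 : Matrix n n D) ∈ span R (I ∩ Set.center (Matrix n n D)) := by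
  cases isEmpty_or_nonempty n
  · rw [Subsingleton.elim (1 : Matrix n n D) 0]
    exact zero_mem _
  let i₀ : n := Classical.arbitrary n
  let e : Fin (Fintype.card (n × n)) ≃ n × n := (Fintype.equivFin _).symm
  let K := (span R (I ∩ Set.center (Matrix n n D))).comap
    ((Algebra.linearMap D (Matrix n n D)).restrictScalars R)
  suffices h_one : (1 : D) ∈ K by simpa [K] using h_one
  rw [← capelliForm_single_eq_one e i₀]
  refine capelliForm_mem_of_mem_span (t := I) ?_ (fun k => mulLeftRight_mem_span_image2 hI _ _)
    fun k => hI ▸ mem_top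
  intro L x hL hx
  choose y hy y' hy' hL using hL
  obtain rfl := funext hL
  exact algebraMap_capelliForm_mem_span_inter_center hI e i₀ hy hy' hx

theorem one_mem_span_inter_center {A : Type*} [Ring A] [Algebra R A] (φ : A ≃ₐ[R] Matrix n n D)
    {I : NonUnitalSubring A} (hI : span R (I : Set A) = ⊤) :
    (1 : A) ∈ span R (I ∩ Set.center A) := by
  have h_image : span R (I.map φ : Set (Matrix n n D)) = ⊤ := by
    have h_map := Submodule.map_span φ.toLinearMap (I : Set A)
    rw [hI, Submodule.map_top, LinearMap.range_eq_top.2 φ.surjective] at h_map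
    exact h_map.symm
  have h_one := Submodule.mem_map_of_mem (f := φ.symm.toLinearMap)
    (one_mem_span_inter_center_matrix h_image)
  rw [Submodule.map_span] at h_one
  rw [← map_one φ.symm]
  refine span_mono ?_ h_one
  rintro _ ⟨_, ⟨⟨x, hx, rfl⟩, h_center⟩, rfl⟩
  have h_symm : φ.symm.toLinearMap (φ x) = x := φ.symm_apply_apply x
  rw [h_symm]
  exact ⟨hx, (MulEquivClass.apply_mem_center_iff φ).1 h_center⟩

end SpanCenter

section StandardIdentity

/-- The standard polynomial `s_m = ∑ σ, sign σ • X_{σ 0} ⋯ X_{σ (m-1)}`; the variables with index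
at least `m` do not occur. -/
def standardPolynomial (R : Type*) [CommRing R] (m : ℕ) : FreeAlgebra R ℕ :=
  ∑ σ : Perm (Fin m), Perm.sign σ • (List.ofFn fun k => FreeAlgebra.ι R (σ k : ℕ)).prod

theorem basisFreeMonoid_ofList {R X : Type*} [CommRing R] (l : List X) :
    FreeAlgebra.basisFreeMonoid R X (FreeMonoid.ofList l) = (l.map (FreeAlgebra.ι R)).prod := by
  simp [FreeAlgebra.basisFreeMonoid, FreeAlgebra.equivMonoidAlgebraFreeMonoid,
    FreeMonoid.lift_apply]

theorem standardPolynomial_ne_zero (R : Type*) [CommRing R] [Nontrivial R] (m : ℕ) :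
    standardPolynomial R m ≠ 0 := by
  let word (σ : Perm (Fin m)) : FreeMonoid ℕ := .ofList (List.ofFn fun k => (σ k : ℕ))
  have h_word_inj {σ : Perm (Fin m)} (h : word σ = word 1) : σ = 1 := by
    ext k
    exact congrFun (List.ofFn_injective (FreeMonoid.ofList.injective h)) k
  have h_sum : standardPolynomial R m =
      ∑ σ, Perm.sign σ • FreeAlgebra.basisFreeMonoid R ℕ (word σ) := by
    simp [standardPolynomial, word, basisFreeMonoid_ofList, List.map_ofFn, Function.comp_def]
  have h_coeff : (FreeAlgebra.basisFreeMonoid R ℕ).repr (standardPolynomial R m) (word 1) = 1 := by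
    rw [h_sum]
    simp only [map_sum, Units.smul_def, map_zsmul, Module.Basis.repr_self, Finsupp.coe_finsetSum,
      Finset.sum_apply, Finsupp.coe_smul, Pi.smul_apply]
    rw [Finset.sum_eq_single 1]
    · simp
    · intro σ _ hσ
      rw [Finsupp.single_eq_of_ne' (mt h_word_inj hσ), smul_zero]
    · simp
  intro h_zero
  simp [h_zero] at h_coeff

theorem lift_standardPolynomial {R A : Type*} [CommRing R] [Ring A] [Algebra R A] (m : ℕ)
    (v : ℕ → A) : FreeAlgebra.lift R v (standardPolynomial R m) =
      ∑ σ : Perm (Fin m), Perm.sign σ • (List.ofFn fun k => v (σ k)).prod := by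
  simp [standardPolynomial, map_list_prod, List.map_ofFn, Function.comp_def, Units.smul_def]

theorem alternatingMap_eq_zero_of_card_lt {R M N ι κ : Type*} [CommRing R] [AddCommGroup M]
    [Module R M] [AddCommGroup N] [Module R N] [Fintype ι] [Fintype κ] (b : Module.Basis κ R M)
    (f : M [⋀^ι]→ₗ[R] N) (h : Fintype.card κ < Fintype.card ι) : f = 0 := by
  refine Module.Basis.ext_alternating b fun v hv => ?_
  exact absurd (Fintype.card_le_of_injective v hv) h.not_ge

theorem lift_standardPolynomial_eq_zero {R D A B κ : Type*} [CommRing R] [Ring A] [Algebra R A]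
    [CommRing D] [Ring B] [Algebra D B] [Fintype κ] (b : Module.Basis κ D B) {φ : A →+* B}
    (hφ : Function.Injective φ) {m : ℕ} (hm : Fintype.card κ < m) (v : ℕ → A) :
    FreeAlgebra.lift R v (standardPolynomial R m) = 0 := by
  have h_alternating :
      MultilinearMap.alternatization (MultilinearMap.mkPiAlgebraFin D m B) = 0 :=
    alternatingMap_eq_zero_of_card_lt b _ (by simpa using hm)
  have h_image := DFunLike.congr_fun h_alternating fun k : Fin m => φ (v k)
  refine (injective_iff_map_eq_zero φ).1 hφ _ ?_
  rw [lift_standardPolynomial]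
  simpa [MultilinearMap.alternatization_apply, map_list_prod, List.map_ofFn, Function.comp_def,
    Units.smul_def] using h_image

end StandardIdentity

section Components

variable {ι : Type*} [DecidableEq ι]

theorem coe_decompose_map {κ M N σ τ : Type*} [DecidableEq κ] [AddCommMonoid M] [AddCommMonoid N]
    [SetLike σ M] [AddSubmonoidClass σ M] [SetLike τ N] [AddSubmonoidClass τ N]
    (ℳ : ι → σ) [Decomposition ℳ] (𝒩 : κ → τ) [Decomposition 𝒩]
    (T : M →+ N) {d : ι → κ} (hd : Function.Injective d) (hT : ∀ i, ∀ x ∈ ℳ i, T x ∈ 𝒩 (d i))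
    (x : M) (i : ι) : (decompose 𝒩 (T x) (d i) : N) = T (decompose ℳ x i) := by
  induction x using Decomposition.inductionOn ℳ with
  | zero => simp
  | @homogeneous j x =>
    obtain rfl | hij := eq_or_ne i j
    · rw [decompose_of_mem_same 𝒩 (hT i x x.2), decompose_of_mem_same ℳ x.2]
    · rw [decompose_of_mem_ne 𝒩 (hT j x x.2) (hd.ne hij.symm),
        decompose_of_mem_ne ℳ x.2 hij.symm, map_zero]
  | add x y hx hy => simp [hx, hy]

theorem isHomogeneous_of_eq_iSup {R S M : Type*} [CommSemiring R] [Semiring S] [Algebra R S]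
    [AddCommMonoid M] [Module R M] [Module S M] [IsScalarTower R S M] {𝒜 : ι → Submodule S M}
    [Decomposition 𝒜] {N : Submodule R M} (hN : N = ⨆ i, N ⊓ (𝒜 i).restrictScalars R) :
    SetLike.IsHomogeneous 𝒜 N := by
  intro i x hx
  rw [hN] at hx
  induction hx using iSup_induction' with
  | mem j x hx =>
    obtain rfl | hij := eq_or_ne j i
    · rw [decompose_of_mem_same 𝒜 hx.2]
      exact hx.1
    · rw [decompose_of_mem_ne 𝒜 hx.2 hij]
      exact N.zero_mem
  | zero => simp
  | add x y _ _ hx hy => simpa using N.add_mem hx hy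

theorem eq_iSup_of_isHomogeneous {S M : Type*} [Semiring S] [AddCommMonoid M] [Module S M]
    {𝒜 : ι → Submodule S M} [Decomposition 𝒜] {N : Submodule S M}
    (hN : SetLike.IsHomogeneous 𝒜 N) : N = ⨆ i, N ⊓ 𝒜 i := by
  classical
  refine le_antisymm (fun x hx => ?_) (iSup_le fun i => inf_le_left)
  rw [← sum_support_decompose 𝒜 x]
  exact sum_mem fun i _ => mem_iSup_of_mem i ⟨hN i hx, (decompose 𝒜 x i).2⟩

theorem coe_decompose_mem_span {R M : Type*} [Semiring R] [AddCommMonoid M] [Module R M]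
    (ℳ : ι → Submodule R M) [Decomposition ℳ] {s t : Set M} {i : ι}
    (h : ∀ x ∈ s, (decompose ℳ x i : M) ∈ t) {x : M} (hx : x ∈ span R s) :
    (decompose ℳ x i : M) ∈ span R t := by
  induction hx using span_induction with
  | mem x hx => exact subset_span (h x hx)
  | zero => simp
  | add x y _ _ hx hy => simpa using add_mem hx hy
  | smul r x _ hx =>
    rw [decompose_smul, DirectSum.smul_apply]
    exact smul_mem _ r hx

end Components

section GradedAlgebra

variable {FF G A : Type*} [Field FF] [Group G] [DecidableEq G] [Ring A] [Algebra FF A]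
  {𝒜 : G → Submodule FF A} [Decomposition 𝒜]

theorem coe_decompose_mul_of_right_mem (h𝒜 : IsAlgGrading FF 𝒜) (a : A) (g : G) {h : G} {b : A}
    (hb : b ∈ 𝒜 h) : (decompose 𝒜 (a * b) (g * h) : A) = decompose 𝒜 a g * b :=
  coe_decompose_map 𝒜 𝒜 (AddMonoidHom.mulRight b) (mul_left_injective h)
    (fun i x hx => h𝒜.2 i h x hx b hb) a g

theorem coe_decompose_mul_of_left_mem (h𝒜 : IsAlgGrading FF 𝒜) (a : A) (g : G) {h : G} {b : A}
    (hb : b ∈ 𝒜 h) : (decompose 𝒜 (b * a) (h * g) : A) = b * decompose 𝒜 a g :=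
  coe_decompose_map 𝒜 𝒜 (AddMonoidHom.mulLeft b) (mul_right_injective h)
    (fun i x hx => h𝒜.2 h i b hb x hx) a g

theorem one_mem_degree_one (h𝒜 : IsAlgGrading FF 𝒜) : (1 : A) ∈ 𝒜 1 := by
  have h_unit (a : A) : (decompose 𝒜 (1 : A) 1 : A) * a = a := by
    induction a using Decomposition.inductionOn 𝒜 with
    | zero => simp
    | @homogeneous h b =>
      rw [← coe_decompose_mul_of_right_mem h𝒜 1 1 b.2, one_mul, one_mul,
        decompose_of_mem_same 𝒜 b.2]
    | add a b ha hb => rw [mul_add, ha, hb]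
  rw [← h_unit 1, mul_one]
  exact (decompose 𝒜 (1 : A) 1).2

theorem coe_decompose_one_mem_center (h𝒜 : IsAlgGrading FF 𝒜) {z : A} (hz : z ∈ Set.center A) :
    (decompose 𝒜 z 1 : A) ∈ Set.center A := by
  rw [Semigroup.mem_center_iff] at hz ⊢
  intro a
  induction a using Decomposition.inductionOn 𝒜 with
  | zero => simp
  | @homogeneous h b =>
    rw [← coe_decompose_mul_of_right_mem h𝒜 z 1 b.2, ← coe_decompose_mul_of_left_mem h𝒜 z 1 b.2,
      hz, one_mul, mul_one]
  | add a b ha hb => rw [mul_add, add_mul, ha, hb]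

end GradedAlgebra

section GradedModule

variable {FF G D V : Type*} [Field FF] [Group G] [DecidableEq G] [CommRing D] [Algebra FF D]
  [AddCommGroup V] [Module FF V] [Module D V]
  {𝒟 : G → Submodule FF D} {𝒱 : G → Submodule FF V}

theorem coe_decompose_smul_of_mem [Decomposition 𝒟] [Decomposition 𝒱]
    (hDV : ∀ g h, ∀ d ∈ 𝒟 g, ∀ x ∈ 𝒱 h, d • x ∈ 𝒱 (g * h)) (c : D) (g : G) {h : G} {x : V}
    (hx : x ∈ 𝒱 h) : (decompose 𝒱 (c • x) (g * h) : V) = (decompose 𝒟 c g : D) • x :=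
  coe_decompose_map 𝒟 𝒱 ((smulAddHom D V).flip x) (mul_left_injective h)
    (fun i d hd => hDV i h d hd x hx) c g

theorem span_isHomogeneous [Decomposition 𝒟] [Decomposition 𝒱]
    (hDV : ∀ g h, ∀ d ∈ 𝒟 g, ∀ x ∈ 𝒱 h, d • x ∈ 𝒱 (g * h)) {s : Set V}
    (hs : ∀ x ∈ s, ∃ h, x ∈ 𝒱 h) : SetLike.IsHomogeneous 𝒱 (span D s) := by
  intro g v hv
  induction hv using closure_induction with
  | zero => simp
  | add x y _ _ hx hy => simpa using add_mem hx hy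
  | smul_mem c x hx =>
    obtain ⟨h, hxh⟩ := hs x hx
    rw [← inv_mul_cancel_right g h, coe_decompose_smul_of_mem hDV c (g * h⁻¹) hxh]
    exact smul_mem _ _ (subset_span hx)

theorem free_of_isGradedDivisionAlgebra (hD : IsGradedDivisionAlgebra FF 𝒟) (hV : IsInternal 𝒱)
    (hDV : ∀ g h, ∀ d ∈ 𝒟 g, ∀ x ∈ 𝒱 h, d • x ∈ 𝒱 (g * h)) : Module.Free D V := by
  let _ := hD.1.1.chooseDecomposition
  let _ := hV.chooseDecomposition
  obtain ⟨s, hs_indep, hs_max⟩ :=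
    exists_maximal_linearIndepOn D (Subtype.val : {v : V // ∃ h, v ∈ 𝒱 h} → V)
  let N := span D (Subtype.val '' s)
  have hN : SetLike.IsHomogeneous 𝒱 N := span_isHomogeneous hDV <| by
    rintro _ ⟨v, -, rfl⟩
    exact v.2
  have h_homogeneous {h : G} {v : V} (hv : v ∈ 𝒱 h) : v ∈ N := by
    by_cases hvs : ⟨v, h, hv⟩ ∈ s
    · exact subset_span ⟨_, hvs, rfl⟩
    obtain ⟨a, ha, hav⟩ := hs_max _ hvs
    obtain ⟨g, hg⟩ : ∃ g, (decompose 𝒟 a g : D) ≠ 0 := by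
      contrapose! ha
      exact (decompose 𝒟).injective (DFinsupp.ext fun g => Subtype.ext (by simpa using ha g))
    obtain ⟨d, -, hd⟩ := hD.2.2 g _ (decompose 𝒟 a g).2 hg
    have h_comp : (decompose 𝒟 a g : D) • v ∈ N :=
      coe_decompose_smul_of_mem hDV a g hv ▸ hN (g * h) hav
    simpa [smul_smul, mul_comm d, hd] using N.smul_mem d h_comp
  have h_top : ⊤ ≤ N := fun v _ => by
    induction v using Decomposition.inductionOn 𝒱 with
    | zero => exact N.zero_mem
    | homogeneous v => exact h_homogeneous v.2
    | add v w hv hw => exact N.add_mem (hv trivial) (hw trivial)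
  exact .of_basis (Module.Basis.mk hs_indep (Set.image_eq_range _ s ▸ h_top))

end GradedModule

section EndEquiv

variable {FF D V A : Type*} [Field FF] [CommRing D] [Algebra FF D] [AddCommGroup V] [Module FF V]
  [Module D V] [IsScalarTower FF D V] [SMulCommClass FF D V] [Ring A] [Algebra FF A]

theorem nonempty_algEquiv_end {ψ : A →ₐ[FF] Module.End FF V} (hψ : Function.Injective ψ)
    (h_range : ∀ f, f ∈ EndDV FF (D := D) (V := V) ↔ ∃ a, ψ a = f) :
    Nonempty (A ≃ₐ[FF] Module.End D V) := by
  let forget : Module.End D V →ₐ[FF] Module.End FF V := Algebra.lsmul FF FF V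
  have h_forget : Function.Injective forget := fun f g hfg =>
    LinearMap.ext fun x => LinearMap.congr_fun hfg x
  have h_range_eq : ψ.range = forget.range := by
    ext f
    refine (h_range f).symm.trans ⟨fun hf => ⟨⟨f.toAddHom, hf⟩, rfl⟩, ?_⟩
    rintro ⟨g, rfl⟩
    exact g.map_smul
  exact ⟨((AlgEquiv.ofInjective ψ hψ).trans (Subalgebra.equivOfEq _ _ h_range_eq)).trans
    (AlgEquiv.ofInjective forget h_forget).symm⟩

end EndEquiv

section Span

variable {R A : Type*} [CommRing R] [Ring A] [Algebra R A] {s t : Set A}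

theorem mul_mem_span_of_span_eq_top (hs : span R s = ⊤)
    (ht : ∀ a ∈ s, ∀ x ∈ t, a * x ∈ t ∧ x * a ∈ t) (a : A) {x : A} (hx : x ∈ span R t) :
    a * x ∈ span R t ∧ x * a ∈ span R t := by
  have ha : a ∈ span R s := hs ▸ mem_top
  constructor
  · have h_mem := mul_mem_mul ha hx
    rw [span_mul_span] at h_mem
    exact span_mono (Set.mul_subset_iff.2 fun b hb y hy => (ht b hb y hy).1) h_mem
  · have h_mem := mul_mem_mul hx ha
    rw [span_mul_span] at h_mem
    exact span_mono (Set.mul_subset_iff.2 fun y hy b hb => (ht b hb y hy).2) h_mem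

theorem span_eq_top_of_homogeneous_ideal {ι F : Type*} [DecidableEq ι] [Semiring F] [Module F A]
    {𝒜 : ι → Submodule R A} [Decomposition 𝒜] {I : Submodule F A}
    (hsimple : ∀ J : Submodule R A, (∀ a, ∀ x ∈ J, a * x ∈ J ∧ x * a ∈ J) →
      J = ⨆ i, J ⊓ 𝒜 i → J = ⊥ ∨ J = ⊤)
    (hs : span R s = ⊤) (hI : ∀ a ∈ s, ∀ x ∈ I, a * x ∈ I ∧ x * a ∈ I)
    (hI_hom : SetLike.IsHomogeneous 𝒜 I) (hI_ne : I ≠ ⊥) : span R (I : Set A) = ⊤ := by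
  have h_span_hom : SetLike.IsHomogeneous 𝒜 (span R (I : Set A)) :=
    fun i _ hx => coe_decompose_mem_span 𝒜 (hI_hom i) hx
  refine (hsimple _ (fun a x hx => mul_mem_span_of_span_eq_top hs hI a hx)
    (eq_iSup_of_isHomogeneous h_span_hom)).resolve_left fun h_bot => hI_ne ?_
  rw [Submodule.eq_bot_iff]
  exact span_eq_bot.1 h_bot

theorem exists_ne_zero_of_one_mem_span [Nontrivial A] (h : (1 : A) ∈ span R s) :
    ∃ z ∈ s, z ≠ 0 := by
  by_contra! h_zero
  rw [span_eq_bot.2 h_zero, mem_bot] at h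
  exact one_ne_zero h

theorem eq_one_of_mul_eq_self_of_one_mem_span {u : A} (hu : ∀ x ∈ s, u * x = x)
    (h : (1 : A) ∈ span R s) : u = 1 := by
  simpa using LinearMap.eqOn_span (f := LinearMap.mulLeft R u) (g := LinearMap.id) hu h

end Span

section HomogeneousIdeals

variable {F FF G A n D : Type*} [Field F] [Field FF] [Algebra F FF] [Group G] [DecidableEq G]
  [Ring A] [Algebra FF A] [Algebra F A] [IsScalarTower F FF A] [Fintype n] [DecidableEq n]
  [CommRing D] [Algebra FF D] {𝒜 : G → Submodule FF A} {S : NonUnitalSubalgebra F A}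
  {I : Submodule F A}

theorem one_mem_span_inter_ZAe (h𝒜 : IsAlgGrading FF 𝒜)
    (hsimple : ∀ J : Submodule FF A, (∀ a, ∀ x ∈ J, a * x ∈ J ∧ x * a ∈ J) →
      J = ⨆ g, J ⊓ 𝒜 g → J = ⊥ ∨ J = ⊤)
    (φ : A ≃ₐ[FF] Matrix n n D) (hS : span FF (S : Set A) = ⊤) (hI_le : I ≤ S.toSubmodule)
    (hI : ∀ a ∈ S, ∀ x ∈ I, a * x ∈ I ∧ x * a ∈ I)
    (hI_hom : I = ⨆ g, I ⊓ (𝒜 g).restrictScalars F) (hI_ne : I ≠ ⊥) :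
    (1 : A) ∈ span FF (I ∩ ZAe FF F S 𝒜) := by
  let _ := h𝒜.1.chooseDecomposition
  replace hI_hom : SetLike.IsHomogeneous 𝒜 I := isHomogeneous_of_eq_iSup hI_hom
  let I' : NonUnitalSubring A :=
    { I.toAddSubgroup with mul_mem' := fun {x _} hx hy => (hI x (hI_le hx) _ hy).1 }
  have h_top : span FF (I' : Set A) = ⊤ :=
    span_eq_top_of_homogeneous_ideal hsimple hS hI hI_hom hI_ne
  rw [← decompose_of_mem_same 𝒜 (one_mem_degree_one h𝒜)]
  refine coe_decompose_mem_span 𝒜 ?_ (one_mem_span_inter_center φ h_top)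
  rintro x ⟨hxI, hx_center⟩
  have h_central := Semigroup.mem_center_iff.1 (coe_decompose_one_mem_center h𝒜 hx_center)
  exact ⟨hI_hom 1 hxI, hI_le (hI_hom 1 hxI), fun y _ => (h_central y).symm, (decompose 𝒜 x 1).2⟩

theorem exists_ne_zero_mem_ZAe (h𝒜 : IsAlgGrading FF 𝒜)
    (hsimple : ∀ J : Submodule FF A, (∀ a, ∀ x ∈ J, a * x ∈ J ∧ x * a ∈ J) →
      J = ⨆ g, J ⊓ 𝒜 g → J = ⊥ ∨ J = ⊤)
    (φ : A ≃ₐ[FF] Matrix n n D) (hS : span FF (S : Set A) = ⊤) (hI_le : I ≤ S.toSubmodule)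
    (hI : ∀ a ∈ S, ∀ x ∈ I, a * x ∈ I ∧ x * a ∈ I)
    (hI_hom : I = ⨆ g, I ⊓ (𝒜 g).restrictScalars F) (hI_ne : I ≠ ⊥) :
    ∃ z ∈ I, z ≠ 0 ∧ z ∈ ZAe FF F S 𝒜 := by
  have h_nontrivial : Nontrivial A := (Submodule.nontrivial_iff F).1 (nontrivial_of_ne I ⊥ hI_ne)
  obtain ⟨z, ⟨hzI, hz⟩, hz_ne⟩ := exists_ne_zero_of_one_mem_span
    (one_mem_span_inter_ZAe h𝒜 hsimple φ hS hI_le hI hI_hom hI_ne)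
  exact ⟨z, hzI, hz_ne, hz⟩

end HomogeneousIdeals

theorem homog_ideal_meets_center_and_PI_general
    {F : Type*} [Field F] {G : Type*} [Group G] [DecidableEq G]
    {FF : Type*} [Field FF] [Algebra F FF]
    {tA : Type*} [Ring tA] [Algebra FF tA] [Algebra F tA] [IsScalarTower F FF tA]
    {D : Type*} [CommRing D] [Algebra FF D] {n : Type*} [Fintype n] [DecidableEq n]
    (𝒜 : G → Submodule FF tA) (hgrA : IsAlgGrading FF 𝒜)
    (hsimple : ∀ I : Submodule FF tA, (∀ a : tA, ∀ x ∈ I, a * x ∈ I ∧ x * a ∈ I) →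
        (I = ⨆ g, I ⊓ 𝒜 g) → I = ⊥ ∨ I = ⊤)
    (φ : tA ≃ₐ[FF] Matrix n n D)
    (S : NonUnitalSubalgebra F tA)
    (hShomog : S.toSubmodule = ⨆ g, S.toSubmodule ⊓ (𝒜 g).restrictScalars F)
    (hspan : Submodule.span FF (S : Set tA) = ⊤) :
    (∀ I : Submodule F tA, I ≤ S.toSubmodule →
        (∀ a ∈ S, ∀ x ∈ I, a * x ∈ I ∧ x * a ∈ I) →
        (I = ⨆ g, I ⊓ (𝒜 g).restrictScalars F) → I ≠ ⊥ →
        ∃ z ∈ I, z ≠ 0 ∧ z ∈ ZAe FF F S 𝒜) ∧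
    (∃ f : FreeAlgebra F ℕ, f ≠ 0 ∧
        ∀ v : ℕ → tA, (∀ i, v i ∈ S) → FreeAlgebra.lift F v f = 0) ∧
    ((∃ u ∈ ZAe FF F S 𝒜, (∀ x ∈ ZAe FF F S 𝒜, u * x = x) ∧ u ≠ 0 ∧
        ∀ x ∈ ZAe FF F S 𝒜, x ≠ 0 → ∃ y ∈ ZAe FF F S 𝒜, x * y = u) →
      (∃ a ∈ S, ∃ b ∈ S, a * b ≠ 0) ∧
        ∀ I : Submodule F tA, I ≤ S.toSubmodule →
          (∀ a ∈ S, ∀ x ∈ I, a * x ∈ I ∧ x * a ∈ I) →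
          (I = ⨆ g, I ⊓ (𝒜 g).restrictScalars F) →
          I = ⊥ ∨ I = S.toSubmodule) := by
  refine ⟨fun I => exists_ne_zero_mem_ZAe hgrA hsimple φ hspan, ?_, ?_⟩
  · exact ⟨_, standardPolynomial_ne_zero F _, fun v _ => lift_standardPolynomial_eq_zero
      (Matrix.stdBasis D n n) (φ := φ) φ.injective (Nat.lt_succ_self _) v⟩
  rintro ⟨u, hu, hu_unit, hu_ne, hu_inv⟩
  have hS_ne : S.toSubmodule ≠ ⊥ := fun h_bot => hu_ne ((mem_bot F).1 (h_bot ▸ hu.1))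
  obtain rfl : u = 1 := eq_one_of_mul_eq_self_of_one_mem_span (fun x hx => hu_unit x hx.2)
    (one_mem_span_inter_ZAe hgrA hsimple φ hspan le_rfl
      (fun a ha x hx => ⟨S.mul_mem ha hx, S.mul_mem hx ha⟩) hShomog hS_ne)
  refine ⟨⟨1, hu.1, 1, hu.1, by simpa using hu_ne⟩, fun I hI_le hI hI_hom => ?_⟩
  refine or_iff_not_imp_left.2 fun hI_ne => le_antisymm hI_le fun a ha => ?_
  obtain ⟨z, hzI, hz_ne, hz⟩ :=
    exists_ne_zero_mem_ZAe hgrA hsimple φ hspan hI_le hI hI_hom hI_ne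
  obtain ⟨y, hy, hzy⟩ := hu_inv z hz hz_ne
  have h_one : (1 : tA) ∈ I := hzy ▸ (hI y hy.1 z hzI).2
  simpa using (hI a ha 1 h_one).1

/-- Let `A = S` be a homogeneous `F`-subalgebra of a `G`-graded simple `FF`-algebra `Ã` which is
graded-isomorphic to `End_D(V)` for a finite-dimensional graded vector space `V` over a
commutative graded division `FF`-algebra `D`, with `FF·A = Ã`.  Then every nonzero homogeneous
ideal of `A` meets `Z(A)_e` nontrivially, `A` satisfies an ordinary polynomial identity, and in
particular if `Z(A)_e` is a field then `A` is a graded simple `F`-algebra. -/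
theorem homog_ideal_meets_center_and_PI
    {F : Type*} [Field F] {G : Type*} [Group G] [DecidableEq G]
    {FF : Type*} [Field FF] [Algebra F FF]
    {tA : Type*} [Ring tA] [Algebra FF tA] [Algebra F tA] [IsScalarTower F FF tA]
    {D : Type*} [CommRing D] [Algebra FF D]
    {V : Type*} [AddCommGroup V] [Module FF V] [Module D V] [IsScalarTower FF D V]
    [SMulCommClass FF D V]
    (𝒜 : G → Submodule FF tA) (𝒟 : G → Submodule FF D) (𝒱 : G → Submodule FF V)
    (hgrA : IsAlgGrading FF 𝒜)
    -- `Ã` is graded simple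
    (hsimple : ∀ I : Submodule FF tA, (∀ a : tA, ∀ x ∈ I, a * x ∈ I ∧ x * a ∈ I) →
        (I = ⨆ g, I ⊓ 𝒜 g) → I = ⊥ ∨ I = ⊤)
    -- `D` is a commutative graded division algebra
    (hD : IsGradedDivisionAlgebra FF 𝒟)
    -- `V` is a graded vector space over `D` ...
    (hV : DirectSum.IsInternal 𝒱)
    (hDV : ∀ (g h : G), ∀ d ∈ 𝒟 g, ∀ x ∈ 𝒱 h, d • x ∈ 𝒱 (g * h))
    -- ... which is finite-dimensional over `D`
    (hfd : ∃ s : Finset V, Submodule.span D (s : Set V) = ⊤)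
    -- (i) `Ã ≅ End_D(V)` as graded `FF`-algebras
    (ψ : tA →ₐ[FF] Module.End FF V)
    (hψinj : Function.Injective ψ)
    (hψsurj : ∀ f : Module.End FF V, f ∈ EndDV FF (D := D) (V := V) ↔ ∃ a : tA, ψ a = f)
    (hψgr : ∀ g : G, (𝒜 g).map ψ.toLinearMap =
        EndDV FF (D := D) (V := V) ⊓ endVGrading FF 𝒱 g)
    -- (ii) `A = S` is a homogeneous `F`-subalgebra of `Ã`
    (S : NonUnitalSubalgebra F tA)
    (hShomog : S.toSubmodule = ⨆ g, S.toSubmodule ⊓ (𝒜 g).restrictScalars F)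
    -- (iii) `FF·A = Ã`
    (hspan : Submodule.span FF (S : Set tA) = ⊤) :
    -- every nonzero homogeneous ideal of `A` meets `Z(A)_e` nontrivially
    (∀ I : Submodule F tA, I ≤ S.toSubmodule →
        (∀ a ∈ S, ∀ x ∈ I, a * x ∈ I ∧ x * a ∈ I) →
        (I = ⨆ g, I ⊓ (𝒜 g).restrictScalars F) → I ≠ ⊥ →
        ∃ z ∈ I, z ≠ 0 ∧ z ∈ ZAe FF F S 𝒜) ∧
    -- `A` satisfies an ordinary polynomial identity
    (∃ f : FreeAlgebra F ℕ, f ≠ 0 ∧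
        ∀ v : ℕ → tA, (∀ i, v i ∈ S) → FreeAlgebra.lift F v f = 0) ∧
    -- if `Z(A)_e` is a field, `A` is graded simple
    ((∃ u ∈ ZAe FF F S 𝒜, (∀ x ∈ ZAe FF F S 𝒜, u * x = x) ∧ u ≠ 0 ∧
        ∀ x ∈ ZAe FF F S 𝒜, x ≠ 0 → ∃ y ∈ ZAe FF F S 𝒜, x * y = u) →
      (∃ a ∈ S, ∃ b ∈ S, a * b ≠ 0) ∧
        ∀ I : Submodule F tA, I ≤ S.toSubmodule →
          (∀ a ∈ S, ∀ x ∈ I, a * x ∈ I ∧ x * a ∈ I) →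
          (I = ⨆ g, I ⊓ (𝒜 g).restrictScalars F) →
          I = ⊥ ∨ I = S.toSubmodule) := by
  have h_free : Module.Free D V := free_of_isGradedDivisionAlgebra hD hV hDV
  have h_finite : Module.Finite D V := ⟨hfd⟩
  obtain ⟨φ⟩ := nonempty_algEquiv_end hψinj hψsurj
  let toMatrix := LinearMap.toMatrixAlgEquiv (Module.Free.chooseBasis D V)
  exact homog_ideal_meets_center_and_PI_general 𝒜 hgrA hsimple
    (φ.trans (toMatrix.restrictScalars FF)) S hShomog hspan
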